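/- (B̃†_rig,η[1/t])^{φ^h=1} = F_0 ⊗_{ℚ_p} B_e, where the φ^h-invariants are computed via the Gal(F_0/ℚ_p)-semilinear action of φ and Speiser's lemma. -/

import Mathlib

/-!
The proof is the explicit form of Speiser's lemma for the cyclic group generated by `σ`.
Fix a `ℚ_p`-basis `e` of `F₀` and put `A = (σ^j e_i)_{j,i}`, a square matrix of size `h`. The powers
`σ^j` with `j < h` are distinct, so Dedekind's independence of characters makes `A` invertible
(`isUnit_conjMatrix`).

* Injectivity: if `∑ e_i b_i = 0` with `φ b_i = b_i`, applying `φ^j` gives `∑ (σ^j e_i) b_i = 0` for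
  every `j < h`, hence all `b_i` vanish.
* Image: if `φ^h x = x`, the traces `b_i = ∑_j φ^j (e_i x) = ∑_j A_{ji} φ^j x` are fixed by `φ`, and
  the column of index `0` of `A⁻¹` recovers `x = φ^0 x` as an `F₀`-linear combination of the `b_i`.
-/

open scoped TensorProduct

/-- The matrix `(σ^j e_i)_{j,i}` of conjugates of a family `e` under the powers of `σ`. -/
def conjMatrix {K L : Type*} [Field K] [Field L] [Algebra K L] {h : ℕ}
    (σ : L →ₐ[K] L) (e : Fin h → L) : Matrix (Fin h) (Fin h) L :=
  Matrix.of fun j i => (σ ^ (j : ℕ)) (e i)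

/-- Independence of characters: a linear relation between the rows of `conjMatrix σ e` extends from
the basis `e` to a linear relation between the distinct characters `σ^j`. -/
lemma isUnit_conjMatrix {K L : Type*} [Field K] [Field L] [Algebra K L] {h : ℕ}
    (σ : L →ₐ[K] L) (hσ : orderOf σ = h) (e : Module.Basis (Fin h) K L) :
    IsUnit (conjMatrix σ e) := by
  rw [← Matrix.linearIndependent_rows_iff_isUnit]
  have hchar : LinearIndependent L
      (fun j : Fin h => (((σ ^ (j : ℕ) : L →ₐ[K] L) : L →* L) : L → L)) := by
    refine (linearIndependent_monoidHom L L).comp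
      (fun j : Fin h => ((σ ^ (j : ℕ) : L →ₐ[K] L) : L →* L)) ?_
    intro j k hjk
    have hpow : σ ^ (j : ℕ) = σ ^ (k : ℕ) := by
      ext x
      exact DFunLike.congr_fun hjk x
    exact Fin.ext (pow_injOn_Iio_orderOf (by simp [hσ]) (by simp [hσ]) hpow)
  rw [Fintype.linearIndependent_iff] at hchar ⊢
  intro v hv
  refine hchar v ?_
  have hlin : (∑ j, v j • (σ ^ (j : ℕ)).toLinearMap : L →ₗ[K] L) = 0 := by
    refine e.ext fun i => ?_
    simpa [conjMatrix, Matrix.row] using congrFun hv i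
  funext x
  simpa using DFunLike.congr_fun hlin x

lemma pow_map_of_semilinear {K L B : Type*} [Field K] [Field L] [Algebra K L] [CommRing B]
    [Algebra K B] (φ : B →ₐ[K] B) (ι : L →ₐ[K] B) (σ : L →ₐ[K] L)
    (hφσ : ∀ x, φ (ι x) = ι (σ x)) (n : ℕ) (x : L) : (φ ^ n) (ι x) = ι ((σ ^ n) x) := by
  induction n with
  | zero => simp
  | succ n ih => rw [pow_succ', pow_succ', AlgHom.mul_apply, AlgHom.mul_apply, ih, hφσ]

lemma pow_map_of_fixed {K B : Type*} [Field K] [CommRing B] [Algebra K B] (φ : B →ₐ[K] B)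
    {b : B} (hb : φ b = b) (n : ℕ) : (φ ^ n) b = b := by
  induction n with
  | zero => simp
  | succ n ih => rw [pow_succ', AlgHom.mul_apply, ih, hb]

/-- The trace `∑_{j<h} φ^j y` of an element with `φ^h y = y` is fixed by `φ`. -/
lemma map_sum_pow_of_fixed {K B : Type*} [Field K] [CommRing B] [Algebra K B] (φ : B →ₐ[K] B)
    {h : ℕ} {y : B} (hy : (φ ^ h) y = y) :
    φ (∑ j : Fin h, (φ ^ (j : ℕ)) y) = ∑ j : Fin h, (φ ^ (j : ℕ)) y := by
  rw [Fin.sum_univ_eq_sum_range (fun j => (φ ^ j) y) h, map_sum]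
  have hshift : ∀ j, φ ((φ ^ j) y) = (φ ^ (j + 1)) y := fun j => by
    rw [pow_succ', AlgHom.mul_apply]
  simp only [hshift]
  have h1 := Finset.sum_range_succ (fun j => (φ ^ j) y) h
  rw [Finset.sum_range_succ', hy] at h1
  simpa using h1

theorem statement6
    -- `ℚ_p` and `F₀`, the maximal unramified subextension of `F`, of degree `h`
    (Qp F0 : Type) [Field Qp] [Field F0] [Algebra Qp F0]
    [FiniteDimensional Qp F0] [IsGalois Qp F0]
    (h : ℕ) (hh : 0 < h) (hdeg : Module.finrank Qp F0 = h)
    -- `Bη = B̃†_rig,η[1/t]` with its Frobenius `φ`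
    (Bη : Type) [CommRing Bη] [Algebra Qp Bη]
    (φ : Bη →ₐ[Qp] Bη)
    -- the canonical inclusion `F₀ → Bη` and the absolute Frobenius `σ` of `F₀`
    (ιF0 : F0 →ₐ[Qp] Bη) (hinj : Function.Injective ιF0)
    (σ : F0 →ₐ[Qp] F0) (hσh : σ ^ h = 1)
    (hσord : ∀ k : ℕ, 0 < k → k < h → σ ^ k ≠ 1)
    (hφσ : ∀ x : F0, φ (ιF0 x) = ιF0 (σ x)) :
    -- conclusion: the multiplication map `F₀ ⊗_{ℚ_p} B_e → Bη` is injective with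
    -- image the `φ^h`-invariants of `Bη`
    ∃ ψ : (F0 ⊗[Qp] ↥(AlgHom.equalizer φ (AlgHom.id Qp Bη))) →ₐ[Qp] Bη,
      (∀ (c : F0) (b : ↥(AlgHom.equalizer φ (AlgHom.id Qp Bη))),
          ψ (c ⊗ₜ[Qp] b) = ιF0 c * (b : Bη)) ∧
      Function.Injective ψ ∧
      ψ.range = AlgHom.equalizer (φ ^ h) (AlgHom.id Qp Bη) := by
  set Be := AlgHom.equalizer φ (AlgHom.id Qp Bη) with hBe
  have hfix : ∀ b : Be, φ (b : Bη) = b := fun b => b.2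
  have hord : orderOf σ = h := (orderOf_eq_iff hh).2 ⟨hσh, fun k hk hk0 => hσord k hk0 hk⟩
  let e := Module.finBasisOfFinrankEq Qp F0 hdeg
  have hA := isUnit_conjMatrix σ hord e
  have hdet := (Matrix.isUnit_iff_isUnit_det _).1 hA
  set A := conjMatrix σ e with hAdef
  have hιpow := pow_map_of_semilinear φ ιF0 σ hφσ
  refine ⟨Algebra.TensorProduct.productMap ιF0 Be.val, fun c b => by simp, ?_, ?_⟩
  · rw [injective_iff_map_eq_zero]
    intro z hz
    obtain ⟨b, rfl⟩ := TensorProduct.eq_repr_basis_left e z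
    rw [Finsupp.sum_fintype _ _ (by simp)] at hz ⊢
    simp only [map_sum, Algebra.TensorProduct.productMap_apply_tmul, Subalgebra.coe_val] at hz
    have hrow : ∀ j, ∑ i, ιF0 (A j i) * (b i : Bη) = 0 := fun j => by
      have := congrArg (φ ^ (j : ℕ)) hz
      simp only [map_sum, map_mul, map_zero, hιpow, pow_map_of_fixed φ (hfix _)] at this
      exact this
    have hb : ∀ k, b k = 0 := fun k => by
      apply Subtype.ext
      calc (b k : Bη) = ∑ i, ιF0 ((A⁻¹ * A) k i) * (b i : Bη) := by
            simp [Matrix.nonsing_inv_mul A hdet, Matrix.one_apply]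
        _ = ∑ j, ιF0 (A⁻¹ k j) * ∑ i, ιF0 (A j i) * (b i : Bη) := by
            simp only [Matrix.mul_apply, map_sum, map_mul, Finset.sum_mul, Finset.mul_sum,
              mul_assoc]
            exact Finset.sum_comm
        _ = 0 := by simp [hrow]
    simp [hb]
  · apply le_antisymm
    · rintro _ ⟨z, rfl⟩
      change (φ ^ h) (Algebra.TensorProduct.productMap ιF0 Be.val z) =
        Algebra.TensorProduct.productMap ιF0 Be.val z
      induction z using TensorProduct.induction_on with
      | zero => simp
      | tmul c b =>
        simp only [Algebra.TensorProduct.productMap_apply_tmul,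
          Subalgebra.coe_val, map_mul, hιpow, hσh, AlgHom.one_apply,
          pow_map_of_fixed φ (hfix b)]
      | add y z hy hz =>
        simp only [map_add] at hy hz ⊢
        rw [hy, hz]
    · intro x hx
      replace hx : (φ ^ h) x = x := hx
      let b : Fin h → Be := fun i => ⟨∑ j : Fin h, (φ ^ (j : ℕ)) (ιF0 (e i) * x),
        map_sum_pow_of_fixed φ (by rw [map_mul, hιpow, hσh, hx, AlgHom.one_apply])⟩
      have hb : ∀ i, (b i : Bη) = ∑ j : Fin h, ιF0 (A j i) * (φ ^ (j : ℕ)) x := fun i => by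
        simp only [b, map_mul, hιpow]
        rfl
      let j₀ : Fin h := ⟨0, hh⟩
      refine ⟨∑ i, (A⁻¹ i j₀) ⊗ₜ[Qp] b i, ?_⟩
      change Algebra.TensorProduct.productMap ιF0 Be.val _ = x
      simp only [map_sum, Algebra.TensorProduct.productMap_apply_tmul, Subalgebra.coe_val]
      calc ∑ i, ιF0 (A⁻¹ i j₀) * (b i : Bη)
          = ∑ j : Fin h, ιF0 ((A * A⁻¹) j j₀) * (φ ^ (j : ℕ)) x := by
            simp only [hb, Matrix.mul_apply, map_sum, map_mul, Finset.sum_mul, Finset.mul_sum]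
            rw [Finset.sum_comm]
            refine Finset.sum_congr rfl fun j _ => Finset.sum_congr rfl fun i _ => ?_
            ring
        _ = x := by
            rw [Matrix.mul_nonsing_inv A hdet, Finset.sum_eq_single j₀]
            · simp [j₀]
            · intro j _ hj
              simp [Matrix.one_apply_ne hj]
            · simp
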